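/- Let f, g : ℝ^N → (−∞, ∞] be Borel measurable and suppose there are constants c > 0 and α > 0 such that f(x) ≥ c|x|^α and g(x) ≥ c|x|^α for all |x| large enough. Then: (i) if m_f := inf f and m_g := inf g are finite and m_f + m_g > 0, then (f□g)⁻¹ ∈ L^p(ℝ^N) for every p with p ≥ 1 and p > N/α; (ii) if g ≥ 0 and m_{f_+} + m_g > 0 (where f_+ := max{f,0}), then (f⊻g)⁻¹ ∈ L^p(ℝ^N) for every p with p ≥ 1 and p > N/α. -/

import Mathlib

open MeasureTheory Filter Set
open scoped ENNReal NNReal Pointwise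

noncomputable section

/-- `ℝ^N` with the Euclidean structure and Lebesgue measure. -/
abbrev ES (N : ℕ) := EuclideanSpace ℝ (Fin N)

variable {N : ℕ}

/-- The operation `(f ⊼ g)(x) = sup_y min (f (x - y)) (g y)` for extended-real valued
functions. -/
def supMinE (f g : ES N → EReal) (x : ES N) : EReal := ⨆ y, min (f (x - y)) (g y)

/-- The operation `(f ⊻ g)(x) = inf_y max (f (x - y)) (g y)` for extended-real valued
functions. -/
def infMaxE (f g : ES N → EReal) (x : ES N) : EReal := ⨅ y, max (f (x - y)) (g y)

/-- The infimal convolution `(f □ g)(x) = inf_y (f (x - y) + g y)`. -/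
def infConvE (f g : ES N → EReal) (x : ES N) : EReal := ⨅ y, (f (x - y) + g y)

/-- The operation `(f ⊼ g)(x) = sup_y min (f (x - y)) (g y)` for `[0,∞]`-valued functions. -/
def supMin (f g : ES N → ℝ≥0∞) (x : ES N) : ℝ≥0∞ := ⨆ y, min (f (x - y)) (g y)

/-- A Young function: a nonconstant, nondecreasing, convex, left-continuous
`φ : [0,∞] → [0,∞]` with `φ 0 = 0`. -/
structure IsYoungFunction (φ : ℝ≥0∞ → ℝ≥0∞) : Prop where
  nonconstant : ∃ x y, φ x ≠ φ y
  map_zero : φ 0 = 0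
  mono : Monotone φ
  convex : ∀ ⦃a b x y : ℝ≥0∞⦄, a + b = 1 → φ (a * x + b * y) ≤ a * φ x + b * φ y
  left_continuous : ∀ x, ContinuousWithinAt φ (Set.Iio x) x

/-- The Luxemburg norm `‖h‖_φ = inf {r > 0 | ∫ φ (r⁻¹ |h|) ≤ 1}` (`= ∞` if no such `r`),
for a nonnegative function `h`. -/
def luxNorm (φ : ℝ≥0∞ → ℝ≥0∞) (h : ES N → ℝ≥0∞) : ℝ≥0∞ :=
  sInf {r : ℝ≥0∞ | 0 < r ∧ ∫⁻ x, φ (r⁻¹ * h x) ≤ 1}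

/-- The nonnegative part of an extended real, as an element of `[0,∞]`. -/
def toENN (a : EReal) : ℝ≥0∞ := if a = ⊤ then ⊤ else ENNReal.ofReal a.toReal

/-- The reciprocal `1/a ∈ [0,∞]` of an extended real (intended for `a ≥ 0`), with the
conventions `1/0 = ∞` and `1/∞ = 0`. -/
def eInv (a : EReal) : ℝ≥0∞ := (toENN a)⁻¹

/-- The enclosing radius of a set `X ⊆ ℝ^N`: the infimum of the radii of closed balls
containing `X` (`0` for `X = ∅`, `∞` if `X` is unbounded). -/
def encRadius (X : Set (ES N)) : ℝ≥0∞ := sInf {r : ℝ≥0∞ | ∃ c : ES N, ∀ x ∈ X, edist x c ≤ r}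

/-- The transform `f̂(x) = γ_f^+(|x|)` where `γ_f^+(t) = inf {ξ | ρ_f^+(ξ) ≤ t}` and
`ρ_f^+(ξ)` is the enclosing radius of the upper level set `{f > ξ}`. -/
def hatE (f : ES N → EReal) (x : ES N) : EReal :=
  sInf {ξ : EReal | encRadius {y | ξ < f y} ≤ (‖x‖₊ : ℝ≥0∞)}

/-- The lower transform `f̌ = -((-f)^)`. -/
def checkE (f : ES N → EReal) (x : ES N) : EReal := - hatE (fun y => - f y) x

/-- The transform `f̂` for `[0,∞]`-valued functions. -/
def hatT (f : ES N → ℝ≥0∞) (x : ES N) : ℝ≥0∞ :=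
  sInf {ξ : ℝ≥0∞ | encRadius {y | ξ < f y} ≤ (‖x‖₊ : ℝ≥0∞)}

/-- The lower transform `f̌(x) = γ_f^-(|x|)`, `γ_f^-(t) = sup {ξ | ρ({f < ξ}) ≤ t}`,
for `[0,∞]`-valued functions. -/
def checkT (f : ES N → ℝ≥0∞) (x : ES N) : ℝ≥0∞ :=
  sSup {ξ : ℝ≥0∞ | encRadius {y | f y < ξ} ≤ (‖x‖₊ : ℝ≥0∞)}

/-- The `L^p` "norm" (`p ∈ [1,∞]`, essential supremum when `p = ∞`) of a `[0,∞]`-valued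
function. -/
def pNorm (p : ℝ≥0∞) (h : ES N → ℝ≥0∞) : ℝ≥0∞ :=
  if p = ∞ then essSup h volume else (∫⁻ x, h x ^ p.toReal) ^ (1 / p.toReal)

/-!
For every `y` one of `x - y`, `y` has norm at least `‖x‖ / 2`, so the growth of `f` and `g` passes
to `⨅ y, max (f (x - y)) (g y)` with a smaller constant. If `f` and `g` are bounded below by a real
`a`, then `f (x - y) + g y ≥ max (f (x - y)) (g y) + a`, and the infimal convolution inherits the
growth as well. A function with this growth and positive infimum dominates `δ (1 + ‖x‖) ^ α` on
the whole space for some `δ > 0`, and `(1 + ‖x‖) ^ (-α p)` is integrable as soon as `α p` exceeds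
the dimension.
-/

theorem eInv_eq_inv_toENNReal (a : EReal) : eInv a = a.toENNReal⁻¹ := rfl

theorem eInv_antitone : Antitone eInv := fun _ _ h =>
  ENNReal.inv_le_inv.2 (EReal.toENNReal_le_toENNReal h)

theorem eInv_coe_rpow {r : ℝ} (hr : 0 < r) (p : ℝ) :
    eInv (r : EReal) ^ p = ENNReal.ofReal (r ^ (-p)) := by
  rw [eInv_eq_inv_toENNReal, EReal.real_coe_toENNReal, ENNReal.inv_rpow,
    ← ENNReal.rpow_neg, ENNReal.ofReal_rpow_of_pos hr]

theorem max_add_le_add_of_le {M : Type*} [AddCommMonoid M] [LinearOrder M] [IsOrderedAddMonoid M]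
    {a s t : M} (hs : a ≤ s) (ht : a ≤ t) : max s t + a ≤ s + t := by
  rcases le_total s t with hst | hts
  · rw [max_eq_right hst, add_comm]
    gcongr
  · rw [max_eq_left hts]
    gcongr

theorem pos_max_iInf_of_pos_iInf_max_zero_add {ι M : Type*} [AddCommMonoid M]
    [CompleteLinearOrder M] [IsOrderedAddMonoid M] {f g : ι → M}
    (h : 0 < (⨅ i, max (f i) 0) + ⨅ i, g i) : 0 < max (⨅ i, f i) (⨅ i, g i) := by
  by_contra! hle
  obtain ⟨hf, hg⟩ := max_le_iff.1 hle
  rw [← iInf_sup_eq, sup_eq_right.2 hf, zero_add] at h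
  exact h.not_ge hg

/-- `f` grows at infinity at least like `‖x‖ ^ α`: the growth condition on `f` and `g`, with the
multiplicative constant existentially quantified, as only its positivity matters. The filter
`Bornology.cobounded` stands for `‖x‖` large enough. -/
def HasPowerGrowth {E : Type*} [Norm E] [Bornology E] (α : ℝ) (f : E → EReal) : Prop :=
  ∃ c : ℝ, 0 < c ∧ ∀ᶠ x in Bornology.cobounded E, ((c * ‖x‖ ^ α : ℝ) : EReal) ≤ f x

namespace HasPowerGrowth

section SeminormedAddGroup

variable {E : Type*} [SeminormedAddGroup E] {α : ℝ} {f g : E → EReal}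

theorem of_forall_le_norm {c R : ℝ} (hc : 0 < c)
    (h : ∀ x, R ≤ ‖x‖ → ((c * ‖x‖ ^ α : ℝ) : EReal) ≤ f x) : HasPowerGrowth α f :=
  ⟨c, hc, (eventually_cobounded_le_norm R).mono h⟩

theorem mono (hf : HasPowerGrowth α f) (hfg : f ≤ g) : HasPowerGrowth α g :=
  let ⟨c, hc, h⟩ := hf
  ⟨c, hc, h.mono fun x hx => hx.trans (hfg x)⟩

theorem add_const (hα : 0 < α) (hf : HasPowerGrowth α f) (b : ℝ) :
    HasPowerGrowth α (fun x => f x + b) := by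
  obtain ⟨c, hc, h⟩ := hf
  have hlarge : ∀ᶠ x in Bornology.cobounded E, -b / (c / 2) ≤ ‖x‖ ^ α :=
    ((tendsto_rpow_atTop hα).comp tendsto_norm_cobounded_atTop).eventually_ge_atTop _
  refine ⟨c / 2, by positivity, ?_⟩
  filter_upwards [h, hlarge] with x hx hb
  rw [div_le_iff₀ (by positivity)] at hb
  calc ((c / 2 * ‖x‖ ^ α : ℝ) : EReal) ≤ ((c * ‖x‖ ^ α + b : ℝ) : EReal) :=
        EReal.coe_le_coe_iff.2 (by linarith)
    _ = ((c * ‖x‖ ^ α : ℝ) : EReal) + b := EReal.coe_add _ _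
    _ ≤ f x + b := by gcongr

theorem iInf_max (hα : 0 ≤ α) (hf : HasPowerGrowth α f) (hg : HasPowerGrowth α g) :
    HasPowerGrowth α (fun x => ⨅ y, max (f (x - y)) (g y)) := by
  obtain ⟨c, hc, hf⟩ := hf
  obtain ⟨d, hd, hg⟩ := hg
  obtain ⟨R, -, hR⟩ := hasBasis_cobounded_norm.eventually_iff.1 (hf.and hg)
  have scale {k : ℝ} {x z : E} (hk : min c d ≤ k) (hz : ‖x‖ / 2 ≤ ‖z‖) :
      ((min c d / 2 ^ α * ‖x‖ ^ α : ℝ) : EReal) ≤ ((k * ‖z‖ ^ α : ℝ) : EReal) := by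
    have hk0 : 0 ≤ k := (le_min hc.le hd.le).trans hk
    rw [EReal.coe_le_coe_iff]
    calc min c d / 2 ^ α * ‖x‖ ^ α = min c d * (‖x‖ / 2) ^ α := by
          rw [Real.div_rpow (norm_nonneg x) zero_le_two]
          ring
      _ ≤ k * ‖z‖ ^ α := by gcongr
  refine of_forall_le_norm (c := min c d / 2 ^ α) (R := 2 * R) (by positivity)
    fun x hx => le_iInf fun y => le_max_iff.2 ?_
  have htriangle : ‖x‖ ≤ ‖x - y‖ + ‖y‖ := norm_le_norm_sub_add x y
  rcases le_total (‖x‖ / 2) ‖y‖ with hy | hy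
  · have hyR : R ≤ ‖y‖ := by linarith
    exact .inr ((scale (min_le_right c d) hy).trans (hR hyR).2)
  · have hxy : ‖x‖ / 2 ≤ ‖x - y‖ := by linarith
    have hxyR : R ≤ ‖x - y‖ := by linarith
    exact .inl ((scale (min_le_left c d) hxy).trans (hR hxyR).1)

theorem iInf_add (hα : 0 < α) (hf : HasPowerGrowth α f) (hg : HasPowerGrowth α g)
    (hfbot : ⊥ < ⨅ x, f x) (hgbot : ⊥ < ⨅ x, g x) :
    HasPowerGrowth α (fun x => ⨅ y, (f (x - y) + g y)) := by
  obtain ⟨a, -, ha⟩ := EReal.lt_iff_exists_real_btwn.1 (lt_min hfbot hgbot)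
  obtain ⟨haf, hag⟩ := lt_min_iff.1 ha
  refine ((hf.iInf_max hα.le hg).add_const hα a).mono fun x => le_iInf fun y => ?_
  calc (⨅ y, max (f (x - y)) (g y)) + a ≤ max (f (x - y)) (g y) + a := by
        gcongr
        exact iInf_le _ y
    _ ≤ f (x - y) + g y :=
        max_add_le_add_of_le (haf.le.trans (iInf_le f _)) (hag.le.trans (iInf_le g y))

theorem exists_pos_mul_one_add_norm_rpow_le (hα : 0 ≤ α) (hf : HasPowerGrowth α f)
    (hpos : 0 < ⨅ x, f x) :
    ∃ δ : ℝ, 0 < δ ∧ ∀ x, ((δ * (1 + ‖x‖) ^ α : ℝ) : EReal) ≤ f x := by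
  obtain ⟨c, hc, h⟩ := hf
  obtain ⟨m, hm, hmf⟩ := EReal.lt_iff_exists_real_btwn.1 hpos
  replace hm : 0 < m := EReal.coe_pos.1 hm
  obtain ⟨R, -, hR⟩ :=
    hasBasis_cobounded_norm.eventually_iff.1 (h.and (eventually_cobounded_le_norm 1))
  have hR0 : 0 < (1 + |R|) ^ α := by positivity
  refine ⟨min (m / (1 + |R|) ^ α) (c / 2 ^ α), by positivity, fun x => ?_⟩
  rcases le_total R ‖x‖ with hx | hx
  · obtain ⟨hgrowth, hone⟩ := hR hx
    refine le_trans (EReal.coe_le_coe_iff.2 ?_) hgrowth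
    calc min (m / (1 + |R|) ^ α) (c / 2 ^ α) * (1 + ‖x‖) ^ α
        ≤ c / 2 ^ α * (2 * ‖x‖) ^ α := by
          gcongr
          · exact min_le_right _ _
          · linarith
      _ = c * ‖x‖ ^ α := by
          rw [Real.mul_rpow zero_le_two (norm_nonneg x)]
          field_simp
  · refine le_trans (EReal.coe_le_coe_iff.2 ?_) (hmf.le.trans (iInf_le f x))
    calc min (m / (1 + |R|) ^ α) (c / 2 ^ α) * (1 + ‖x‖) ^ α
        ≤ m / (1 + |R|) ^ α * (1 + |R|) ^ α := by
          gcongr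
          · exact min_le_left _ _
          · exact hx.trans (le_abs_self R)
      _ = m := div_mul_cancel₀ m hR0.ne'

end SeminormedAddGroup

theorem lintegral_eInv_rpow_lt_top {E : Type*} [NormedAddCommGroup E] [NormedSpace ℝ E]
    [FiniteDimensional ℝ E] [MeasurableSpace E] [BorelSpace E] {μ : Measure E}
    [μ.IsAddHaarMeasure] {α p : ℝ} {f : E → EReal} (hα : 0 < α) (hf : HasPowerGrowth α f)
    (hpos : 0 < ⨅ x, f x) (hp : (Module.finrank ℝ E : ℝ) / α < p) :
    ∫⁻ x, eInv (f x) ^ p ∂μ < ∞ := by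
  have hp0 : 0 < p := lt_of_le_of_lt (by positivity) hp
  obtain ⟨δ, hδ, hle⟩ := hf.exists_pos_mul_one_add_norm_rpow_le hα.le hpos
  have hbound (x : E) : eInv (f x) ^ p ≤
      ENNReal.ofReal (δ ^ (-p)) * ENNReal.ofReal ((1 + ‖x‖) ^ (-(p * α))) := by
    have hx : 0 < 1 + ‖x‖ := by positivity
    calc eInv (f x) ^ p ≤ eInv ((δ * (1 + ‖x‖) ^ α : ℝ) : EReal) ^ p := by
          gcongr
          exact eInv_antitone (hle x)
      _ = ENNReal.ofReal ((δ * (1 + ‖x‖) ^ α) ^ (-p)) := eInv_coe_rpow (by positivity) p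
      _ = ENNReal.ofReal (δ ^ (-p)) * ENNReal.ofReal ((1 + ‖x‖) ^ (-(p * α))) := by
          rw [← ENNReal.ofReal_mul (by positivity), Real.mul_rpow hδ.le (by positivity),
            ← Real.rpow_mul hx.le, mul_neg, mul_comm α]
  calc ∫⁻ x, eInv (f x) ^ p ∂μ
      ≤ ∫⁻ x, ENNReal.ofReal (δ ^ (-p)) * ENNReal.ofReal ((1 + ‖x‖) ^ (-(p * α))) ∂μ :=
        lintegral_mono hbound
    _ = ENNReal.ofReal (δ ^ (-p)) * ∫⁻ x, ENNReal.ofReal ((1 + ‖x‖) ^ (-(p * α))) ∂μ :=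
        lintegral_const_mul' _ _ ENNReal.ofReal_ne_top
    _ < ∞ := ENNReal.mul_lt_top ENNReal.ofReal_lt_top
        (finite_integral_one_add_norm ((div_lt_iff₀ hα).1 hp))

end HasPowerGrowth

theorem inv_infConv_mem_Lp_and_inv_infMax_mem_Lp_general {E : Type*} [NormedAddCommGroup E]
    [NormedSpace ℝ E] [FiniteDimensional ℝ E] [MeasurableSpace E] [BorelSpace E] (μ : Measure E)
    [μ.IsAddHaarMeasure] {f g : E → EReal} {α p : ℝ} (hα : 0 < α)
    (hf : HasPowerGrowth α f) (hg : HasPowerGrowth α g)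
    (hp : (Module.finrank ℝ E : ℝ) / α < p) :
    (0 < (⨅ x, f x) + ⨅ x, g x → ∫⁻ x, eInv (⨅ y, (f (x - y) + g y)) ^ p ∂μ < ∞) ∧
    (0 < max (⨅ x, f x) (⨅ x, g x) →
      ∫⁻ x, eInv (⨅ y, max (f (x - y)) (g y)) ^ p ∂μ < ∞) := by
  refine ⟨fun hpos => ?_, fun hpos => ?_⟩
  · obtain ⟨hfbot, hgbot⟩ := EReal.bot_lt_add_iff.1 (EReal.bot_lt_zero.trans hpos)
    exact (hf.iInf_add hα hg hfbot hgbot).lintegral_eInv_rpow_lt_top hα (hpos.trans_le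
      (le_iInf fun x => le_iInf fun y => add_le_add (iInf_le f (x - y)) (iInf_le g y))) hp
  · exact (hf.iInf_max hα.le hg).lintegral_eInv_rpow_lt_top hα (hpos.trans_le
      (le_iInf fun x => le_iInf fun y => max_le_max (iInf_le f (x - y)) (iInf_le g y))) hp

theorem inv_infConv_mem_Lp_and_inv_infMax_mem_Lp {N : ℕ} (hN : 0 < N)
    (f g : ES N → EReal) (hf : Measurable f) (hg : Measurable g)
    (hf' : ∀ x, f x ≠ ⊥) (hg' : ∀ x, g x ≠ ⊥)
    (c α : ℝ) (hc : 0 < c) (hα : 0 < α)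
    (hfar : ∃ R : ℝ, ∀ x : ES N, R ≤ ‖x‖ →
      ((c * ‖x‖ ^ α : ℝ) : EReal) ≤ f x ∧ ((c * ‖x‖ ^ α : ℝ) : EReal) ≤ g x) :
    ((⊥ : EReal) < (⨅ x, f x) → (⨅ x, f x) < ⊤ →
      (⊥ : EReal) < (⨅ x, g x) → (⨅ x, g x) < ⊤ →
      0 < (⨅ x, f x) + ⨅ x, g x →
      ∀ p : ℝ, 1 ≤ p → (N : ℝ) / α < p →
        ∫⁻ x, eInv (infConvE f g x) ^ p < ∞) ∧
    ((∀ x, 0 ≤ g x) → 0 < (⨅ x, max (f x) 0) + ⨅ x, g x →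
      ∀ p : ℝ, 1 ≤ p → (N : ℝ) / α < p →
        ∫⁻ x, eInv (infMaxE f g x) ^ p < ∞) := by
  obtain ⟨R, hR⟩ := hfar
  have hfgrowth : HasPowerGrowth α f := .of_forall_le_norm hc fun x hx => (hR x hx).1
  have hggrowth : HasPowerGrowth α g := .of_forall_le_norm hc fun x hx => (hR x hx).2
  have general (p : ℝ) (hp : (N : ℝ) / α < p) :=
    inv_infConv_mem_Lp_and_inv_infMax_mem_Lp_general (volume : Measure (ES N)) hα hfgrowth hggrowth
      (finrank_euclideanSpace_fin (𝕜 := ℝ) (n := N) ▸ hp)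
  exact ⟨fun _ _ _ _ hpos p _ hp => (general p hp).1 hpos, fun _ hpos p _ hp =>
    (general p hp).2 (pos_max_iInf_of_pos_iInf_max_zero_add hpos)⟩

end
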